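/- Let w ∈ 𝒲(J₁,J₂), and consider the action of the group W_{J₂} × W_{J₂} × W_{J₁} on W given by (a, b, c) · x = a c x c⁻¹ b⁻¹ (a well-defined group action since every element of W_{J₁} commutes with every element of W_{J₂}). Then for v, v' ∈ W_{I(J₁,w)}, the elements w v and w v' lie in the same orbit of this action if and only if v' = (w⁻¹ u w) v u⁻¹ for some u ∈ W_{I(J₁,w)} (i.e. v and v' are Ad(w)-twisted conjugate in W_{I(J₁,w)}); moreover every orbit of this action contained in W_{J₂} π⁻¹(w) W_{J₂} contains w v for some v ∈ W_{I(J₁,w)}. Hence v ↦ (orbit of w v) induces a bijection from the set of Ad(w)-twisted conjugacy classes of W_{I(J₁,w)} onto the set of orbits of this action contained in W_{J₂} π⁻¹(w) W_{J₂}. -/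

import Mathlib

open CoxeterSystem

variable {B : Type*} [Finite B] {W : Type*} [Group W] {M : CoxeterMatrix B}

namespace PartialConjugation

/-- The standard parabolic subgroup `W_J` of `W`, generated by the simple
reflections indexed by `J`. -/
def parab (cs : CoxeterSystem M W) (J : Set B) : Subgroup W :=
  Subgroup.closure (cs.simple '' J)

/-- `w ∈ W^J`: `w` is a minimal length representative of its left coset `w W_J`. -/
def IsMinRep (cs : CoxeterSystem M W) (J : Set B) (w : W) : Prop :=
  ∀ v ∈ parab cs J, cs.length w ≤ cs.length (w * v)

variable (cs : CoxeterSystem M W) (J₁ J₂ : Set B)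

/-- `K` is a `w`-special subset of `J₁` (for untwisted partial conjugation). -/
def WSpecial (w : W) (K : Set B) : Prop :=
  K ⊆ J₁ ∧ ∀ k ∈ K, ∃ j ∈ K, w * cs.simple k * w⁻¹ = cs.simple j

/-- The set `I(J₁, w)`: the union of all `w`-special subsets of `J₁`. -/
def Iset (w : W) : Set B := ⋃₀ {K | WSpecial cs J₁ w K}

/-- The fiber `π⁻¹(w) = {u x u⁻¹ : u ∈ W_{J₁}, x ∈ w W_{I(J₁,w)}}` of the
partial conjugation decomposition. -/
def fiber (w : W) : Set W :=
  {y | ∃ u ∈ parab cs J₁, ∃ v ∈ parab cs (Iset cs J₁ w), y = u * (w * v) * u⁻¹}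

/-- The sets `K_i(w)`: `K_0(w) = J₂` and
`K_i(w) = {j ∈ J₁ : w s_k w⁻¹ = s_j for some k ∈ K_{i-1}(w)}`. -/
def Kseq (w : W) : ℕ → Set B
  | 0 => J₂
  | i + 1 => {j ∈ J₁ | ∃ k ∈ Kseq w i, w * cs.simple k * w⁻¹ = cs.simple j}

/-- The set `𝒲(J₁, J₂)`: elements `w ∈ W^{J₁}` that are minimal length
elements of the cosets `W_{K_i(w)} w` for all `i ≥ 0`. -/
def calW : Set W :=
  {w | IsMinRep cs J₁ w ∧
    ∀ i : ℕ, ∀ u ∈ parab cs (Kseq cs J₁ J₂ w i),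
      cs.length w ≤ cs.length (u * w)}

/-- The set `W_{J₂} π⁻¹(w) W_{J₂}`. -/
def dSet (w : W) : Set W :=
  {y | ∃ a ∈ parab cs J₂, ∃ b ∈ parab cs J₂, ∃ x ∈ fiber cs J₁ w,
    y = a * x * b}

/-- The orbit of `x` under the action `(a, b, c) · x = a c x c⁻¹ b⁻¹` of
`W_{J₂} × W_{J₂} × W_{J₁}` on `W`. -/
def orbAct (x : W) : Set W :=
  {y | ∃ a ∈ parab cs J₂, ∃ b ∈ parab cs J₂, ∃ c ∈ parab cs J₁,
    y = a * c * x * c⁻¹ * b⁻¹}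

/-- `v` and `v'` are `Ad(w)`-twisted conjugate in `W_{I(J₁,w)}`:
`v' = (w⁻¹ u w) v u⁻¹` for some `u ∈ W_{I(J₁,w)}`. -/
def AdTwConj (w v v' : W) : Prop :=
  ∃ u ∈ parab cs (Iset cs J₁ w), v' = (w⁻¹ * u * w) * v * u⁻¹

/-!
Only the separation of orbits needs an argument, and it is proved for every `w ∈ W^{J₁}` by
induction on `ℓ w`. The sets `K_n(w⁻¹)` commute with each other and with `I(J₁,w)`. If `w` has a
right descent `k ∈ J₂`, or a left descent `k ∈ K_n(w⁻¹)`, then removing it keeps `w` in `W^{J₁}`,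
changes neither `I(J₁,w)` nor the twisted conjugation, and moves each `w v` inside its orbit: for
`k ∈ K_n(w⁻¹)` the factor `s_k` is carried around by conjugations until its index lies in `J₂`.

When no such descent is left, put `Q = ⋃ n, K_n(w⁻¹)` and `I = I(J₁,w)`. Then `w` is minimal in
`W_{Q ∪ I} w W_{J₁ ∪ J₂}`. Let `a c w v = w v' b c` be an orbit relation, and let `m` be the minimal
element of `W_{(J₁ ∩ Q) ∪ I} c W_I`. Comparing lengths in the double coset of `w` gives
`m w = w m`, so the support of `m` is a `w`-special set; hence `m ∈ W_I`, and `m = 1` by minimality.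
Thus `c = n u` with `n ∈ W_{J₁ ∩ Q}` and `u ∈ W_I`, and moving `n` to the other side, where it
commutes with `W_I`, leaves `v' = (w⁻¹ u w) v u⁻¹` because `W_Q ∩ W_I = 1`.

The exchange condition comes from the action of `W` on `W × ℤ/2`, which counts a reflection in the
inversion sequence of a word modulo 2; that distinct indices give distinct simple reflections is
read off the Tits representation.
-/

section TitsRepresentation

variable {B : Type*}

lemma chebyshevS_eval_two_mul_cos {θ : ℝ} (hθ : Real.sin θ ≠ 0) (n : ℤ) :
    (Polynomial.Chebyshev.S ℝ n).eval (2 * Real.cos θ) =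
      Real.sin ((n + 1) * θ) / Real.sin θ :=
  eq_div_of_mul_eq hθ (Polynomial.Chebyshev.S_two_mul_real_cos θ n)

lemma sin_two_pi_div_ne_zero {m : ℕ} (hm : 3 ≤ m) : Real.sin (2 * Real.pi / m) ≠ 0 := by
  have hm' : (3 : ℝ) ≤ m := by exact_mod_cast hm
  refine (Real.sin_pos_of_pos_of_lt_pi (by positivity) ?_).ne'
  rw [div_lt_iff₀ (by linarith)]
  nlinarith [Real.pi_pos]

lemma chebyshevS_eval_eq_zero_of_even {p : ℕ} (hp : 2 ≤ p) :
    (Polynomial.Chebyshev.S ℝ ((p : ℤ) - 1)).eval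
      (2 * Real.cos (2 * Real.pi / (2 * p : ℕ))) = 0 := by
  have hp0 : (p : ℝ) ≠ 0 := by exact_mod_cast (by lia : p ≠ 0)
  rw [chebyshevS_eval_two_mul_cos (sin_two_pi_div_ne_zero (by lia)), div_eq_zero_iff]
  left
  convert Real.sin_pi using 2
  push_cast
  field_simp
  ring

lemma chebyshevS_eval_add_eq_zero_of_odd {p : ℕ} (hp : 1 ≤ p) :
    (Polynomial.Chebyshev.S ℝ p).eval (2 * Real.cos (2 * Real.pi / (2 * p + 1 : ℕ))) +
      (Polynomial.Chebyshev.S ℝ ((p : ℤ) - 1)).eval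
        (2 * Real.cos (2 * Real.pi / (2 * p + 1 : ℕ))) = 0 := by
  have angle : ((p : ℤ) + 1) * (2 * Real.pi / (2 * p + 1 : ℕ)) =
      2 * Real.pi - (((p : ℤ) - 1 : ℤ) + 1) * (2 * Real.pi / (2 * p + 1 : ℕ)) := by
    push_cast
    field_simp
    ring
  have hs := sin_two_pi_div_ne_zero (m := 2 * p + 1) (by lia)
  rw [chebyshevS_eval_two_mul_cos hs, chebyshevS_eval_two_mul_cos hs, angle,
    Real.sin_two_pi_sub, neg_div, neg_add_cancel]

lemma reflection_mul_reflection_pow_eq_one {V : Type*} [AddCommGroup V] [Module ℝ V]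
    {x y : V} {f g : Module.Dual ℝ V} (hf : f x = 2) (hg : g y = 2) {m : ℕ} (hm : 3 ≤ m)
    (hfg : 2 * Real.cos (2 * Real.pi / m) = f y * g x - 2) :
    (Module.reflection hf * Module.reflection hg) ^ m = 1 := by
  ext1 z
  rw [Module.reflection_mul_reflection_pow_apply hf hg m z _ hfg]
  obtain ⟨p, rfl | rfl⟩ := Nat.even_or_odd' m
  · have h₁ : (((2 * p : ℕ) : ℤ) - 1) / 2 = p - 1 := by lia
    have h₂ : (((2 * p : ℕ) : ℤ) - 2) / 2 = p - 1 := by lia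
    rw [h₁, h₂, chebyshevS_eval_eq_zero_of_even (by lia)]
    simp
  · have h₀ : ((2 * p + 1 : ℕ) : ℤ) / 2 = p := by lia
    have h₁ : (((2 * p + 1 : ℕ) : ℤ) - 1) / 2 = p := by lia
    have h₂ : (((2 * p + 1 : ℕ) : ℤ) - 2) / 2 = p - 1 := by lia
    have h₃ : (((2 * p + 1 : ℕ) : ℤ) - 3) / 2 = p - 1 := by lia
    rw [h₀, h₁, h₂, h₃, chebyshevS_eval_add_eq_zero_of_odd (by lia)]
    simp

/-- The simple coroot of `i` in the Tits representation on the space with basis `B`: the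
functional `2 B(·, eᵢ)`, where `B(eⱼ, eᵢ) = -cos (π / M i j)`. The convention `x / 0 = 0` gives
`B(eⱼ, eᵢ) = -1` when `M i j = 0` encodes an infinite order. -/
noncomputable def simpleCoroot (M : CoxeterMatrix B) (i : B) : Module.Dual ℝ (B →₀ ℝ) :=
  Finsupp.linearCombination ℝ fun j ↦ -2 * Real.cos (Real.pi / M i j)

variable (M : CoxeterMatrix B)

lemma simpleCoroot_single (i j : B) :
    simpleCoroot M i (Finsupp.single j 1) = -2 * Real.cos (Real.pi / M i j) := by
  simp [simpleCoroot]

lemma simpleCoroot_single_self (i : B) : simpleCoroot M i (Finsupp.single i 1) = 2 := by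
  simp [simpleCoroot_single]

/-- The reflection through which `sᵢ` acts in the Tits representation. -/
noncomputable def titsReflection (i : B) : (B →₀ ℝ) ≃ₗ[ℝ] (B →₀ ℝ) :=
  Module.reflection (simpleCoroot_single_self M i)

lemma titsReflection_mul_self (i : B) : titsReflection M i * titsReflection M i = 1 :=
  LinearEquiv.ext (Module.involutive_reflection (simpleCoroot_single_self M i))

lemma titsReflection_mul_sq_eq_one {i j : B} (hij : M i j = 2) :
    (titsReflection M i * titsReflection M j) ^ 2 = 1 := by
  have hi : simpleCoroot M i (Finsupp.single j 1) = 0 := by simp [simpleCoroot_single, hij]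
  have hj : simpleCoroot M j (Finsupp.single i 1) = 0 := by
    simp [simpleCoroot_single, M.symmetric j i, hij]
  ext1 z
  simp only [titsReflection, pow_two, LinearEquiv.mul_apply, Module.reflection_apply, map_sub,
    map_smul, hi, hj, simpleCoroot_single_self, LinearEquiv.coe_one, id_eq]
  module

theorem isLiftable_titsReflection : M.IsLiftable (titsReflection M) := by
  intro i j
  rcases eq_or_ne i j with rfl | hij
  · rw [M.diagonal, pow_one, titsReflection_mul_self]
  have hm₁ : M i j ≠ 1 := M.off_diagonal i j hij
  obtain hm₀ | hm₂ | hm₃ : M i j = 0 ∨ M i j = 2 ∨ 3 ≤ M i j := by lia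
  · rw [hm₀, pow_zero]
  · rw [hm₂, titsReflection_mul_sq_eq_one M hm₂]
  · refine reflection_mul_reflection_pow_eq_one _ _ hm₃ ?_
    rw [simpleCoroot_single, simpleCoroot_single, M.symmetric j i, mul_div_assoc,
      Real.cos_two_mul]
    ring

variable {M} in
theorem simple_injective (cs : CoxeterSystem M W) : Function.Injective cs.simple := by
  intro i j hsimple
  by_contra hij
  have hrefl : titsReflection M i = titsReflection M j := by
    rw [← cs.lift_apply_simple (isLiftable_titsReflection M) i, hsimple,
      cs.lift_apply_simple (isLiftable_titsReflection M) j]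
  have hcoeff := congr($hrefl (Finsupp.single i 1) i)
  norm_num [titsReflection, Module.reflection_apply, simpleCoroot_single_self, hij] at hcoeff

end TitsRepresentation

section Exchange

variable {B : Type*} {M : CoxeterMatrix B} (cs : CoxeterSystem M W)

open Classical in
/-- The permutation by which `sᵢ` acts on pairs of a group element and a sign (an element of
`ZMod 2`): it conjugates the element, and flips the sign exactly at `sᵢ` itself. Composed along a
word, these permutations count occurrences in its inversion sequence modulo `2`. -/
noncomputable def reflectionPerm (i : B) : Equiv.Perm (W × ZMod 2) :=
  Function.Involutive.toPerm
    (fun p ↦ (cs.simple i * p.1 * cs.simple i, p.2 + if p.1 = cs.simple i then 1 else 0)) <| by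
    have fixed (t : W) : cs.simple i * t * cs.simple i = cs.simple i ↔ t = cs.simple i := by
      rw [mul_assoc, mul_eq_left, mul_eq_one_iff_eq_inv, inv_simple]
    rintro ⟨t, e⟩
    by_cases ht : t = cs.simple i
    · simp [ht, add_assoc, CharTwo.add_self_eq_zero]
    · simp only [ht, fixed, if_false, add_zero, Prod.mk.injEq, and_true]
      simp [mul_assoc]

open Classical in
lemma reflectionPerm_inv_apply (i : B) (t : W) (e : ZMod 2) :
    (reflectionPerm cs i)⁻¹ (t, e) =
      (cs.simple i * t * cs.simple i, e + if t = cs.simple i then 1 else 0) :=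
  rfl

open Classical in
lemma count_leftInvSeq_cons (i : B) (ω : List B) (t : W) :
    (cs.leftInvSeq (i :: ω)).count t =
      (cs.leftInvSeq ω).count (cs.simple i * t * cs.simple i) +
        if t = cs.simple i then 1 else 0 := by
  have count_conj :=
    List.count_map_of_injective (cs.leftInvSeq ω) _ (MulAut.conj (cs.simple i)).injective
      (cs.simple i * t * cs.simple i)
  have conj_eq : MulAut.conj (cs.simple i) (cs.simple i * t * cs.simple i) = t := by
    simp [mul_assoc]
  rw [conj_eq] at count_conj
  simp [leftInvSeq, List.count_cons, count_conj, eq_comm (a := cs.simple i)]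

open Classical in
lemma prod_map_reflectionPerm_inv_apply (ω : List B) (t : W) (e : ZMod 2) :
    (ω.map (reflectionPerm cs)).prod⁻¹ (t, e) =
      ((cs.wordProd ω)⁻¹ * t * cs.wordProd ω, e + (cs.leftInvSeq ω).count t) := by
  induction ω generalizing t e with
  | nil => simp
  | cons i ω ih =>
    rw [List.map_cons, List.prod_cons, mul_inv_rev, Equiv.Perm.mul_apply,
      reflectionPerm_inv_apply, ih, count_leftInvSeq_cons]
    refine Prod.ext (by simp [wordProd_cons, mul_assoc]) ?_
    push_cast
    ring

lemma prod_map_alternatingWord {G : Type*} [Monoid G] (f : B → G) (i j : B) (m : ℕ) :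
    ((alternatingWord i j (2 * m)).map f).prod = (f i * f j) ^ m := by
  induction m with
  | zero => simp [alternatingWord]
  | succ m ih =>
    rw [show 2 * (m + 1) = 2 * m + 1 + 1 by ring, alternatingWord_succ', alternatingWord_succ']
    simp [ih, pow_succ', mul_assoc]

lemma leftInvSeq_alternatingWord (i j : B) (m : ℕ) :
    cs.leftInvSeq (alternatingWord i j (2 * m)) =
      (List.range (2 * m)).map fun k ↦ cs.simple i * (cs.simple j * cs.simple i) ^ k := by
  refine List.ext_getElem (by simp) fun k hk _ ↦ ?_
  have hk' : k < 2 * m := by simpa using hk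
  have half : (2 * k + 1) / 2 = k := by lia
  rw [getElem_leftInvSeq_alternatingWord cs i j m k hk', prod_alternatingWord_eq_mul_pow, half]
  simp

theorem isLiftable_reflectionPerm : M.IsLiftable (reflectionPerm cs) := by
  classical
  intro i j
  have pow_order : (cs.simple j * cs.simple i) ^ M i j = 1 := by
    rw [M.symmetric, cs.simple_mul_simple_pow]
  rw [← prod_map_alternatingWord, ← inv_eq_one]
  ext1 ⟨t, e⟩
  rw [prod_map_reflectionPerm_inv_apply, leftInvSeq_alternatingWord, two_mul, List.range_add,
    List.map_append, List.map_map, List.count_append, ← two_mul,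
    cs.prod_alternatingWord_eq_mul_pow]
  have periodic :
      ((fun k ↦ cs.simple i * (cs.simple j * cs.simple i) ^ k) ∘ fun k ↦ M i j + k) =
        fun k ↦ cs.simple i * (cs.simple j * cs.simple i) ^ k := by
    funext k
    simp [pow_add, pow_order]
  rw [periodic, Nat.cast_add, CharTwo.add_self_eq_zero]
  simp

open Classical in
theorem count_leftInvSeq_eq_of_wordProd_eq {ω ω' : List B}
    (h : cs.wordProd ω = cs.wordProd ω') (t : W) :
    ((cs.leftInvSeq ω).count t : ZMod 2) = (cs.leftInvSeq ω').count t := by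
  have lift_wordProd (τ : List B) :
      cs.lift ⟨_, isLiftable_reflectionPerm cs⟩ (cs.wordProd τ) =
        (τ.map (reflectionPerm cs)).prod := by
    simp [wordProd, map_list_prod, Function.comp_def]
  have hperm := congr(($(lift_wordProd ω))⁻¹ (t, 0))
  rw [h, lift_wordProd ω', prod_map_reflectionPerm_inv_apply,
    prod_map_reflectionPerm_inv_apply] at hperm
  simpa using congr(($hperm).2).symm

theorem simple_mem_leftInvSeq {ω : List B} {i : B} (h : cs.IsLeftDescent (cs.wordProd ω) i) :
    cs.simple i ∈ cs.leftInvSeq ω := by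
  classical
  obtain ⟨τ, hτ, hτω⟩ := cs.exists_isReduced (cs.simple i * cs.wordProd ω)
  have hωτ : cs.wordProd ω = cs.wordProd (i :: τ) := by simp [wordProd_cons, ← hτω]
  have not_mem : cs.simple i ∉ cs.leftInvSeq τ := fun hmem ↦ by
    have := (cs.isLeftInversion_of_mem_leftInvSeq hτ hmem).2
    rw [← hτω, simple_mul_simple_cancel_left] at this
    exact this.not_gt h
  by_contra hmem
  have := count_leftInvSeq_eq_of_wordProd_eq cs hωτ (cs.simple i)
  rw [count_leftInvSeq_cons, simple_mul_simple_self, one_mul,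
    List.count_eq_zero_of_not_mem hmem, List.count_eq_zero_of_not_mem not_mem] at this
  simp at this

theorem simple_mem_rightInvSeq {ω : List B} {i : B} (h : cs.IsRightDescent (cs.wordProd ω) i) :
    cs.simple i ∈ cs.rightInvSeq ω := by
  rw [← isLeftDescent_inv_iff, ← wordProd_reverse] at h
  simpa [leftInvSeq_reverse] using simple_mem_leftInvSeq cs h

theorem exists_wordProd_mul_simple_eq_eraseIdx {ω : List B} {i : B}
    (h : cs.IsRightDescent (cs.wordProd ω) i) :
    ∃ k < ω.length, cs.wordProd ω * cs.simple i = cs.wordProd (ω.eraseIdx k) := by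
  obtain ⟨k, hk, hki⟩ := List.mem_iff_getElem.mp (simple_mem_rightInvSeq cs h)
  refine ⟨k, by simpa using hk, ?_⟩
  rw [← cs.wordProd_mul_getD_rightInvSeq, List.getD_eq_getElem _ _ hk, hki]

theorem exchange_mul {x y : W} {i : B} (h : cs.IsRightDescent (x * y) i) :
    cs.IsRightDescent y i ∨
      ∃ x', cs.length x' < cs.length x ∧ x * y * cs.simple i = x' * y := by
  obtain ⟨ρ, hρ, rfl⟩ := cs.exists_isReduced x
  obtain ⟨ω, hω, rfl⟩ := cs.exists_isReduced y
  rw [← wordProd_append] at h ⊢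
  obtain ⟨k, hk, herase⟩ := exists_wordProd_mul_simple_eq_eraseIdx cs h
  rw [herase]
  rcases lt_or_ge k ρ.length with hlt | hge
  · refine .inr ⟨cs.wordProd (ρ.eraseIdx k), ?_, ?_⟩
    · have := cs.length_wordProd_le (ρ.eraseIdx k)
      rw [List.length_eraseIdx_of_lt hlt] at this
      rw [hρ.eq]
      lia
    · rw [List.eraseIdx_append_of_lt_length hlt, wordProd_append]
  · have hk' : k - ρ.length < ω.length := by
      rw [List.length_append] at hk
      lia
    rw [List.eraseIdx_append_of_length_le hge, wordProd_append, wordProd_append, mul_assoc,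
      mul_right_inj] at herase
    have := cs.length_wordProd_le (ω.eraseIdx (k - ρ.length))
    rw [List.length_eraseIdx_of_lt hk', ← herase] at this
    left
    rw [IsRightDescent, hω.eq]
    lia

end Exchange

section Parabolic

variable {B : Type*} {M : CoxeterMatrix B} (cs : CoxeterSystem M W) {K K' : Set B} {u w x y : W}

lemma simple_mem_parab {k : B} (hk : k ∈ K) : cs.simple k ∈ parab cs K :=
  Subgroup.subset_closure ⟨k, hk, rfl⟩

lemma parab_mono (h : K ⊆ K') : parab cs K ≤ parab cs K' :=
  Subgroup.closure_mono (Set.image_mono h)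

lemma wordProd_mem_parab {ω : List B} (h : ∀ k ∈ ω, k ∈ K) : cs.wordProd ω ∈ parab cs K :=
  list_prod_mem <| by simpa using fun k hk ↦ simple_mem_parab cs (h k hk)

@[elab_as_elim]
lemma parab_induction_right {p : (u : W) → u ∈ parab cs K → Prop} (one : p 1 (one_mem _))
    (mul_simple : ∀ u (hu : u ∈ parab cs K) k (hk : k ∈ K), p u hu →
      p (u * cs.simple k) (mul_mem hu (simple_mem_parab cs hk)))
    (hu : u ∈ parab cs K) : p u hu := by
  induction hu using Subgroup.closure_induction_right with
  | one => exact one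
  | mul_right u hu s hs ih =>
    obtain ⟨k, hk, rfl⟩ := hs
    exact mul_simple u hu k hk ih
  | mul_inv_cancel u hu s hs ih =>
    obtain ⟨k, hk, rfl⟩ := hs
    simpa using mul_simple u hu k hk ih

lemma exists_isReduced_of_mem_parab (hu : u ∈ parab cs K) :
    ∃ ω, cs.IsReduced ω ∧ cs.wordProd ω = u ∧ ∀ k ∈ ω, k ∈ K := by
  induction hu using parab_induction_right with
  | one => exact ⟨[], by simp [CoxeterSystem.IsReduced]⟩
  | mul_simple u _ k hk ih =>
    obtain ⟨ω, hω, rfl, hωK⟩ := ih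
    by_cases hdesc : cs.IsRightDescent (cs.wordProd ω) k
    · obtain ⟨n, hn, herase⟩ := exists_wordProd_mul_simple_eq_eraseIdx cs hdesc
      have hlen := (cs.isRightDescent_iff).mp hdesc
      refine ⟨ω.eraseIdx n, ?_, herase.symm, fun j hj ↦ hωK j (List.mem_of_mem_eraseIdx hj)⟩
      rw [CoxeterSystem.IsReduced, ← herase, List.length_eraseIdx_of_lt hn, ← hω.eq]
      lia
    · refine ⟨ω ++ [k], ?_, by simp [wordProd_append],
        by simpa [or_imp, forall_and] using ⟨hωK, hk⟩⟩
      rw [CoxeterSystem.IsReduced, wordProd_append, wordProd_singleton,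
        cs.not_isRightDescent_iff.mp hdesc, hω.eq]
      simp

lemma simple_mem_parab_iff {j : B} : cs.simple j ∈ parab cs K ↔ j ∈ K := by
  refine ⟨fun h ↦ ?_, simple_mem_parab cs⟩
  obtain ⟨ω, hω, hωj, hωK⟩ := exists_isReduced_of_mem_parab cs h
  obtain ⟨k, rfl⟩ := List.length_eq_one_iff.mp (by rw [← hω.eq, hωj, length_simple])
  rw [wordProd_singleton] at hωj
  simpa [simple_injective cs hωj] using hωK

lemma exists_isRightDescent_of_mem_parab (hu : u ∈ parab cs K) (hne : u ≠ 1) :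
    ∃ k ∈ K, cs.IsRightDescent u k := by
  obtain ⟨ω, hω, rfl, hωK⟩ := exists_isReduced_of_mem_parab cs hu
  rcases ω.eq_nil_or_concat with rfl | ⟨τ, k, rfl⟩
  · simp at hne
  · refine ⟨k, hωK k (by simp), ?_⟩
    have := cs.length_wordProd_le τ
    rw [IsRightDescent, hω.eq, List.concat_eq_append, wordProd_append, wordProd_singleton,
      simple_mul_simple_cancel_right]
    simp
    lia

lemma mem_of_isRightDescent {k : B} (hu : u ∈ parab cs K) (hk : cs.IsRightDescent u k) :
    k ∈ K := by
  obtain ⟨ω, -, rfl, hωK⟩ := exists_isReduced_of_mem_parab cs hu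
  obtain ⟨n, -, herase⟩ := exists_wordProd_mul_simple_eq_eraseIdx cs hk
  have herase_mem : cs.wordProd ω * cs.simple k ∈ parab cs K :=
    herase ▸ wordProd_mem_parab cs fun j hj ↦ hωK j (List.mem_of_mem_eraseIdx hj)
  exact (simple_mem_parab_iff cs).mp ((Subgroup.mul_mem_cancel_left _ hu).mp herase_mem)

lemma disjoint_parab (h : Disjoint K K') : Disjoint (parab cs K) (parab cs K') := by
  rw [Subgroup.disjoint_def]
  intro u hu hu'
  by_contra hne
  obtain ⟨k, hk, hdesc⟩ := exists_isRightDescent_of_mem_parab cs hu hne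
  exact Set.disjoint_left.mp h hk (mem_of_isRightDescent cs hu' hdesc)

variable {cs}

theorem IsMinRep.length_mul (hw : IsMinRep cs K w) (hu : u ∈ parab cs K) :
    cs.length (w * u) = cs.length w + cs.length u := by
  induction hn : cs.length u generalizing u with
  | zero => simp [cs.length_eq_zero_iff.mp hn]
  | succ n ih =>
    have hne : u ≠ 1 := by
      rintro rfl
      simp at hn
    obtain ⟨k, hk, hdesc⟩ := exists_isRightDescent_of_mem_parab cs hu hne
    obtain ⟨u, rfl⟩ : ∃ u', u = u' * cs.simple k := ⟨u * cs.simple k, by simp⟩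
    have hu' : u ∈ parab cs K :=
      (Subgroup.mul_mem_cancel_right _ (simple_mem_parab cs hk)).mp hu
    rw [isRightDescent_iff_not_isRightDescent_mul, simple_mul_simple_cancel_right] at hdesc
    have hlen : cs.length u = n := by
      have := cs.not_isRightDescent_iff.mp hdesc
      lia
    have hwu : ¬cs.IsRightDescent (w * u) k := fun h ↦ by
      obtain hdesc' | ⟨w', hlt, hw'⟩ := exchange_mul cs h
      · exact hdesc hdesc'
      · have hw'_eq : w' = w * (u * cs.simple k * u⁻¹) := by
          rw [← mul_assoc, ← mul_assoc, hw', mul_inv_cancel_right]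
        exact (hw _ (mul_mem hu (inv_mem hu'))).not_gt (hw'_eq ▸ hlt)
    rw [← mul_assoc, cs.not_isRightDescent_iff.mp hwu, ih hu' hlen]
    lia

lemma exists_isMinRep_mul (K : Set B) (x : W) :
    ∃ w, IsMinRep cs K w ∧ ∃ u ∈ parab cs K, x = w * u := by
  obtain ⟨_, ⟨u, hu, rfl⟩, hmin⟩ :=
    WellFounded.has_min (measure cs.length).wf {y | ∃ u ∈ parab cs K, x * u = y}
      ⟨x, 1, one_mem _, mul_one x⟩
  refine ⟨x * u, fun v hv ↦ ?_, u⁻¹, inv_mem hu, by group⟩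
  exact not_lt.mp (hmin _ ⟨u * v, mul_mem hu hv, by group⟩)

lemma isMinRep_iff_forall_not_isRightDescent :
    IsMinRep cs K w ↔ ∀ k ∈ K, ¬cs.IsRightDescent w k := by
  refine ⟨fun h k hk ↦ not_lt.mpr (h _ (simple_mem_parab cs hk)), fun h ↦ ?_⟩
  obtain ⟨w, hw, u, hu, rfl⟩ := exists_isMinRep_mul (cs := cs) K w
  suffices hone : u = 1 by simpa [hone] using hw
  by_contra hne
  obtain ⟨k, hk, hdesc⟩ := exists_isRightDescent_of_mem_parab cs hu hne
  apply h k hk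
  rw [IsRightDescent, hw.length_mul hu, mul_assoc,
    hw.length_mul (mul_mem hu (simple_mem_parab cs hk))]
  exact Nat.add_lt_add_left hdesc _

lemma IsMinRep.mono (hw : IsMinRep cs K w) (h : K' ⊆ K) : IsMinRep cs K' w :=
  fun u hu ↦ hw u (parab_mono cs h hu)

lemma IsMinRep.union (h : IsMinRep cs K w) (h' : IsMinRep cs K' w) :
    IsMinRep cs (K ∪ K') w := by
  rw [isMinRep_iff_forall_not_isRightDescent] at *
  rintro k (hk | hk)
  exacts [h k hk, h' k hk]

lemma IsMinRep.eq_one (h : IsMinRep cs K w) (hw : w ∈ parab cs K) : w = 1 := by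
  simpa using h _ (inv_mem hw)

lemma IsMinRep.length_mul_left (hw : IsMinRep cs K w⁻¹) (hu : u ∈ parab cs K) :
    cs.length (u * w) = cs.length u + cs.length w := by
  rw [← cs.length_inv, mul_inv_rev, hw.length_mul (inv_mem hu), cs.length_inv, cs.length_inv,
    add_comm]

lemma IsMinRep.of_length_mul (h : IsMinRep cs K (x * y))
    (hlen : cs.length (x * y) = cs.length x + cs.length y) : IsMinRep cs K y := fun u hu ↦ by
  have := h u hu
  have := cs.length_mul_le x (y * u)
  rw [mul_assoc] at *
  lia

lemma isMinRep_of_mem_parab_of_disjoint (h : Disjoint K K') (hw : w ∈ parab cs K) :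
    IsMinRep cs K' w :=
  isMinRep_iff_forall_not_isRightDescent.mpr fun _ hk hdesc ↦
    Set.disjoint_left.mp h (mem_of_isRightDescent cs hw hdesc) hk

lemma IsMinRep.mul_simple {k : B} (hw : IsMinRep cs K w) (hk : cs.IsRightDescent w k)
    (hcomm : ∀ u ∈ parab cs K, Commute u (cs.simple k)) : IsMinRep cs K (w * cs.simple k) := by
  intro u hu
  have hwk := cs.isRightDescent_iff.mp hk
  have hwu := cs.length_mul_simple (w * u) k
  have hle := hw u hu
  rw [mul_assoc, ← (hcomm u hu).eq, ← mul_assoc]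
  lia

/-- Deodhar's lemma. -/
theorem exists_simple_mul_eq_mul_simple {i : B} (hx : IsMinRep cs K x)
    (hsx : ¬IsMinRep cs K (cs.simple i * x)) :
    ∃ j ∈ K, cs.simple i * x = x * cs.simple j := by
  simp only [isMinRep_iff_forall_not_isRightDescent, not_forall, not_not] at hsx
  obtain ⟨j, hj, hdesc⟩ := hsx
  refine ⟨j, hj, ?_⟩
  obtain hdesc' | ⟨x', hlt, hx'⟩ := exchange_mul cs hdesc
  · exact absurd hdesc' (isMinRep_iff_forall_not_isRightDescent.mp hx j hj)
  · have hone : x' = 1 := by simpa using hlt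
    rw [hone, one_mul] at hx'
    nth_rw 2 [← hx']
    simp

end Parabolic

section ParabCommute

variable {B : Type*} {M : CoxeterMatrix B} {cs : CoxeterSystem M W} {J J' K K' : Set B} {x y : W}

/-- The parabolic subgroups `W_K` and `W_K'` commute elementwise. -/
def ParabCommute (cs : CoxeterSystem M W) (K K' : Set B) : Prop :=
  ∀ x ∈ parab cs K, ∀ y ∈ parab cs K', Commute x y

lemma commute_of_mem_parab (h : ∀ k ∈ K, Commute x (cs.simple k)) (hy : y ∈ parab cs K) :
    Commute x y := by
  induction hy using parab_induction_right with
  | one => exact .one_right x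
  | mul_simple y _ k hk ih => exact ih.mul_right (h k hk)

lemma ParabCommute.of_simple
    (h : ∀ k ∈ K, ∀ k' ∈ K', Commute (cs.simple k) (cs.simple k')) : ParabCommute cs K K' :=
  fun _ hx _ hy ↦ commute_of_mem_parab
    (fun k' hk' ↦ (commute_of_mem_parab (fun k hk ↦ (h k hk k' hk').symm) hx).symm) hy

lemma ParabCommute.symm (h : ParabCommute cs K K') : ParabCommute cs K' K :=
  fun x hx y hy ↦ (h y hy x hx).symm

lemma ParabCommute.mono (h : ParabCommute cs K K') (hJ : J ⊆ K) (hJ' : J' ⊆ K') :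
    ParabCommute cs J J' :=
  fun x hx y hy ↦ h x (parab_mono cs hJ hx) y (parab_mono cs hJ' hy)

lemma ParabCommute.exists_mul_eq_of_mem_union (h : ParabCommute cs K K')
    (hx : x ∈ parab cs (K ∪ K')) : ∃ y ∈ parab cs K, ∃ z ∈ parab cs K', x = y * z := by
  induction hx using parab_induction_right with
  | one => exact ⟨1, one_mem _, 1, one_mem _, by simp⟩
  | mul_simple x _ k hk ih =>
    obtain ⟨y, hy, z, hz, rfl⟩ := ih
    obtain hk | hk := hk
    · have hk := simple_mem_parab cs hk
      exact ⟨y * cs.simple k, mul_mem hy hk, z, hz, by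
        rw [mul_assoc, mul_assoc, (h _ hk z hz).eq]⟩
    · exact ⟨y, hy, z * cs.simple k, mul_mem hz (simple_mem_parab cs hk), mul_assoc _ _ _⟩

end ParabCommute

section ConjInter

variable {B : Type*} {M : CoxeterMatrix B} {cs : CoxeterSystem M W} {J P : Set B}
  {g m q w x : W}

/-- The set of `p ∈ P` with `s_p = w s_j w⁻¹` for some `j ∈ J`. When `w` is the minimal element of
`W_P w W_J`, it generates `W_P ∩ w W_J w⁻¹`. -/
def conjInter (cs : CoxeterSystem M W) (P J : Set B) (w : W) : Set B :=
  {p ∈ P | ∃ j ∈ J, cs.simple p * w = w * cs.simple j}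

lemma mem_conjInter_inv {j : B} :
    j ∈ conjInter cs J P w⁻¹ ↔ j ∈ J ∧ ∃ p ∈ P, cs.simple p * w = w * cs.simple j := by
  refine and_congr_right fun _ ↦ exists_congr fun p ↦ and_congr_right fun _ ↦ ?_
  rw [eq_inv_mul_iff_mul_eq, ← mul_assoc, mul_inv_eq_iff_eq_mul, eq_comm]

lemma conj_mem_parab_conjInter (hx : x ∈ parab cs (conjInter cs P J w)) :
    w⁻¹ * x * w ∈ parab cs (conjInter cs J P w⁻¹) := by
  induction hx using parab_induction_right with
  | one => simp [one_mem]
  | mul_simple x _ k hk ih =>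
    obtain ⟨hk, j, hj, hkj⟩ := hk
    have hconj : w⁻¹ * (x * cs.simple k) * w = w⁻¹ * x * w * cs.simple j := by
      rw [mul_assoc, mul_assoc x, hkj]
      group
    exact hconj ▸ mul_mem ih (simple_mem_parab cs (mem_conjInter_inv.mpr ⟨hj, k, hk, hkj⟩))

lemma mem_conjInter_of_mul_eq (hPw : IsMinRep cs P w⁻¹) (hwJ : IsMinRep cs J w)
    (hx : x ∈ parab cs P) {j : B} (hj : j ∈ J) (hxj : x * w = w * cs.simple j) :
    ∃ p ∈ conjInter cs P J w, x = cs.simple p := by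
  have hlen := congrArg cs.length hxj
  rw [hPw.length_mul_left hx, hwJ.length_mul (simple_mem_parab cs hj), length_simple,
    add_comm, Nat.add_left_cancel_iff, cs.length_eq_one_iff] at hlen
  obtain ⟨p, rfl⟩ := hlen
  exact ⟨p, ⟨(simple_mem_parab_iff cs).mp hx, j, hj, hxj⟩, rfl⟩

lemma IsMinRep.mul_of_conjInter (hPw : IsMinRep cs P w⁻¹) (hwJ : IsMinRep cs J w)
    (hx : x ∈ parab cs P) (hmin : IsMinRep cs (conjInter cs P J w) x) : IsMinRep cs J (x * w) := by
  obtain ⟨ω, hω, rfl, hωP⟩ := exists_isReduced_of_mem_parab cs hx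
  clear hx
  induction ω with
  | nil => simpa using hwJ
  | cons i ω ih =>
    have hω' : cs.IsReduced ω := hω.drop 1
    have hlen : cs.length (cs.wordProd (i :: ω)) = cs.length (cs.wordProd ω) + 1 := by
      rw [hω.eq, hω'.eq, List.length_cons]
    have hi : cs.simple i ∈ parab cs P := simple_mem_parab cs (hωP i (by simp))
    have hωP' : ∀ k ∈ ω, k ∈ P := fun k hk ↦ hωP k (by simp [hk])
    have hx : cs.wordProd ω ∈ parab cs P := wordProd_mem_parab cs hωP'
    rw [wordProd_cons] at hmin hlen ⊢
    rw [mul_assoc]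
    by_contra hnot
    obtain ⟨j, hj, hij⟩ := exists_simple_mul_eq_mul_simple
      (ih hω' hωP' (hmin.of_length_mul (by rw [hlen, length_simple, add_comm]))) hnot
    obtain ⟨p, hp, hconj⟩ := mem_conjInter_of_mul_eq hPw hwJ
      (mul_mem (mul_mem (inv_mem hx) hi) hx) hj
      (show (cs.wordProd ω)⁻¹ * cs.simple i * cs.wordProd ω * w = w * cs.simple j by
        rw [mul_assoc, mul_assoc, hij]
        group)
    have hcancel : cs.simple i * cs.wordProd ω * cs.simple p = cs.wordProd ω := by
      rw [← hconj]
      simp [mul_assoc]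
    have hle := hmin _ (simple_mem_parab cs hp)
    rw [hcancel, hlen] at hle
    lia

theorem exists_mul_eq_of_mem_parab (hPw : IsMinRep cs P w⁻¹) (hwJ : IsMinRep cs J w)
    (hx : x ∈ parab cs P) :
    ∃ h ∈ parab cs P, ∃ e ∈ parab cs (conjInter cs P J w), x = h * e ∧ IsMinRep cs J (h * w) := by
  obtain ⟨h, hmin, e, he, rfl⟩ := exists_isMinRep_mul (cs := cs) (conjInter cs P J w) x
  have hh : h ∈ parab cs P :=
    (Subgroup.mul_mem_cancel_right _ (parab_mono cs (Set.sep_subset _ _) he)).mp hx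
  exact ⟨h, hh, e, he, rfl, hPw.mul_of_conjInter hwJ hh hmin⟩

/-- Kilmoyer's theorem. -/
theorem mem_parab_conjInter (hPw : IsMinRep cs P w⁻¹) (hwJ : IsMinRep cs J w)
    (hx : x ∈ parab cs P) (hxw : w⁻¹ * x * w ∈ parab cs J) :
    x ∈ parab cs (conjInter cs P J w) := by
  obtain ⟨h, hh, e, he, rfl, hmin⟩ := exists_mul_eq_of_mem_parab hPw hwJ hx
  have hew : w⁻¹ * e * w ∈ parab cs J :=
    parab_mono cs (Set.sep_subset _ _) (conj_mem_parab_conjInter he)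
  have hhw : w⁻¹ * h * w ∈ parab cs J := by
    rw [← Subgroup.mul_mem_cancel_right _ hew]
    convert hxw using 1
    group
  have hlen := hmin.length_mul (inv_mem hhw)
  rw [hPw.length_mul_left hh, show h * w * (w⁻¹ * h * w)⁻¹ = w by group] at hlen
  have hone : h = 1 := cs.length_eq_zero_iff.mp (by lia)
  rwa [hone, one_mul]

theorem mul_mul_eq_or_length_lt (hPm : IsMinRep cs P m⁻¹) (hmJ : IsMinRep cs J m)
    (hg : g ∈ parab cs P) (hq : q ∈ parab cs J) :
    g * m * q = m ∨ cs.length m < cs.length (g * m * q) := by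
  obtain ⟨h, hh, e, he, rfl, hmin⟩ := exists_mul_eq_of_mem_parab hPm hmJ hg
  have hem : m⁻¹ * e * m ∈ parab cs J :=
    parab_mono cs (Set.sep_subset _ _) (conj_mem_parab_conjInter he)
  have hfactor : h * e * m * q = h * m * (m⁻¹ * e * m * q) := by group
  have hlen := hmin.length_mul (mul_mem hem hq)
  rw [hPm.length_mul_left hh] at hlen
  rw [hfactor, or_iff_not_imp_right, hlen]
  intro hle
  rw [cs.length_eq_zero_iff.mp (show cs.length h = 0 by lia),
    cs.length_eq_zero_iff.mp (show cs.length (m⁻¹ * e * m * q) = 0 by lia), one_mul, mul_one]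

lemma exists_isMinRep_mul_mul (P J : Set B) (x : W) :
    ∃ m, IsMinRep cs P m⁻¹ ∧ IsMinRep cs J m ∧
      ∃ g ∈ parab cs P, ∃ q ∈ parab cs J, x = g * m * q := by
  obtain ⟨y, hy, q, hq, rfl⟩ := exists_isMinRep_mul (cs := cs) J x
  obtain ⟨n, hn, g, hg, hyn⟩ := exists_isMinRep_mul (cs := cs) P y⁻¹
  obtain rfl : y = g⁻¹ * n⁻¹ := by rw [← mul_inv_rev, ← hyn, inv_inv]
  have hn' : IsMinRep cs P n⁻¹⁻¹ := by rwa [inv_inv]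
  exact ⟨n⁻¹, hn', hy.of_length_mul (hn'.length_mul_left (inv_mem hg)), g⁻¹, inv_mem hg, q, hq,
    rfl⟩

end ConjInter

section ReducedLetters

variable {B : Type*} {M : CoxeterMatrix B} {cs : CoxeterSystem M W} {J K : Set B} {u w x y : W}

/-- The support of `u`: the indices occurring in some reduced expression of `u`. Quantifying
existentially makes this independent of a choice without appealing to Matsumoto's theorem. -/
def reducedLetters (cs : CoxeterSystem M W) (u : W) : Set B :=
  {i | ∃ ω, cs.IsReduced ω ∧ cs.wordProd ω = u ∧ i ∈ ω}

lemma mem_parab_reducedLetters (u : W) : u ∈ parab cs (reducedLetters cs u) := by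
  obtain ⟨ω, hω, rfl⟩ := cs.exists_isReduced u
  exact wordProd_mem_parab cs fun k hk ↦ ⟨ω, hω, rfl, hk⟩

lemma reducedLetters_subset (hu : u ∈ parab cs K) : reducedLetters cs u ⊆ K := by
  rintro i ⟨ω, hω, rfl, hi⟩
  induction ω with
  | nil => simp at hi
  | cons k ω ih =>
    have hk : cs.IsRightDescent (cs.wordProd (k :: ω))⁻¹ k := by
      rw [isRightDescent_inv_iff, IsLeftDescent, hω.eq, wordProd_cons,
        simple_mul_simple_cancel_left]
      exact Nat.lt_succ_of_le (cs.length_wordProd_le ω)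
    have hkK : k ∈ K := mem_of_isRightDescent cs (inv_mem hu) hk
    rw [wordProd_cons, Subgroup.mul_mem_cancel_left _ (simple_mem_parab cs hkK)] at hu
    obtain rfl | hi := List.mem_cons.mp hi
    · exact hkK
    · exact ih (hω.drop 1) hi hu

lemma IsMinRep.length_le_of_wordProd_mul_eq {ω : List B} (hx : IsMinRep cs J x)
    (hadd : cs.length (cs.wordProd ω * x) = ω.length + cs.length x)
    (hy : y ∈ parab cs J) (heq : cs.wordProd ω * x = w * y) : cs.length x ≤ cs.length w := by
  induction ω using List.reverseRecOn generalizing x y with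
  | nil =>
    rw [wordProd_nil, one_mul] at heq
    simpa [heq] using hx _ (inv_mem hy)
  | append_singleton ω i ih =>
    rw [wordProd_append, wordProd_singleton, mul_assoc] at hadd heq
    rw [List.length_append, List.length_singleton] at hadd
    have hle := cs.length_mul_le (cs.wordProd ω) (cs.simple i * x)
    have hω := cs.length_wordProd_le ω
    have hi := cs.length_simple_mul x i
    by_cases hmin : IsMinRep cs J (cs.simple i * x)
    · have := ih hmin (by lia) hy heq
      lia
    · obtain ⟨j, hj, hij⟩ := exists_simple_mul_eq_mul_simple hx hmin
      rw [hij, ← mul_assoc] at hadd heq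
      have hj' := cs.length_mul_simple (cs.wordProd ω * x) j
      have hle' := cs.length_mul_le (cs.wordProd ω) x
      exact ih hx (by lia) (mul_mem hy (simple_mem_parab cs hj))
        (by rw [← mul_assoc, ← heq, simple_mul_simple_cancel_right])

lemma IsMinRep.exists_simple_mul_eq_of_wordProd_mul_eq {ω : List B} (hw : IsMinRep cs J w)
    (hadd : cs.length (cs.wordProd ω * w) = ω.length + cs.length w)
    (hy : y ∈ parab cs J) (heq : cs.wordProd ω * w = w * y) :
    ∀ i ∈ ω, ∃ j, cs.simple i * w = w * cs.simple j := by
  induction ω using List.reverseRecOn generalizing y with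
  | nil => simp
  | append_singleton ω i ih =>
    rw [wordProd_append, wordProd_singleton, mul_assoc] at hadd heq
    rw [List.length_append, List.length_singleton] at hadd
    have hle := cs.length_mul_le (cs.wordProd ω) (cs.simple i * w)
    have hω := cs.length_wordProd_le ω
    have hi := cs.length_simple_mul w i
    have hmin : ¬IsMinRep cs J (cs.simple i * w) := fun hmin ↦ by
      have := hmin.length_le_of_wordProd_mul_eq (by lia) hy heq
      lia
    obtain ⟨j, hj, hij⟩ := exists_simple_mul_eq_mul_simple hw hmin
    rw [hij, ← mul_assoc] at hadd heq
    have hj' := cs.length_mul_simple (cs.wordProd ω * w) j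
    have hle' := cs.length_mul_le (cs.wordProd ω) w
    have hrec := ih (by lia) (mul_mem hy (simple_mem_parab cs hj))
      (by rw [← mul_assoc, ← heq, simple_mul_simple_cancel_right])
    simpa [or_imp, forall_and] using ⟨hrec, j, hij⟩

lemma wordProd_mul_eq_mul_wordProd_map {ω : List B} {f : B → B}
    (h : ∀ i ∈ ω, cs.simple i * w = w * cs.simple (f i)) :
    cs.wordProd ω * w = w * cs.wordProd (ω.map f) := by
  induction ω with
  | nil => simp
  | cons i ω ih =>
    rw [List.map_cons, wordProd_cons, wordProd_cons, mul_assoc,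
      ih fun k hk ↦ h k (List.mem_cons_of_mem i hk), ← mul_assoc, h i List.mem_cons_self,
      mul_assoc]

end ReducedLetters

section Iset

section Special

variable {B : Type*} {M : CoxeterMatrix B} {cs : CoxeterSystem M W} {J K : Set B} {w z : W}

lemma WSpecial.subset_Iset (hK : WSpecial cs J w K) : K ⊆ Iset cs J w :=
  fun _ hk ↦ ⟨K, hK, hk⟩

lemma wSpecial_Iset : WSpecial cs J w (Iset cs J w) := by
  refine ⟨fun i ⟨K, hK, hi⟩ ↦ hK.1 hi, fun i ⟨K, hK, hi⟩ ↦ ?_⟩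
  obtain ⟨j, hj, hij⟩ := hK.2 i hi
  exact ⟨j, hK.subset_Iset hj, hij⟩

lemma Iset_subset : Iset cs J w ⊆ J := wSpecial_Iset.1

lemma Iset_subset_Iset_mul (hz : ∀ i ∈ Iset cs J w, Commute z (cs.simple i)) :
    Iset cs J w ⊆ Iset cs J (w * z) := by
  refine WSpecial.subset_Iset ⟨Iset_subset, fun i hi ↦ ?_⟩
  obtain ⟨j, hj, hij⟩ := wSpecial_Iset.2 i hi
  refine ⟨j, hj, ?_⟩
  rw [← hij, mul_inv_rev, mul_assoc w, (hz i hi).eq]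
  group

end Special

variable {cs : CoxeterSystem M W} {J K : Set B} {m u w : W}

lemma WSpecial.inv (hK : WSpecial cs J w K) : WSpecial cs J w⁻¹ K := by
  refine ⟨hK.1, fun j hj ↦ ?_⟩
  have hmaps : (fun x ↦ w * x * w⁻¹) '' (cs.simple '' K) ⊆ cs.simple '' K := by
    rintro _ ⟨_, ⟨k, hk, rfl⟩, rfl⟩
    obtain ⟨j, hj, hkj⟩ := hK.2 k hk
    exact ⟨j, hj, hkj.symm⟩
  have heq := Set.eq_of_subset_of_ncard_le hmaps
    (Set.ncard_image_of_injective _ (MulAut.conj w).injective).ge (Set.toFinite _)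
  obtain ⟨_, ⟨i, hi, rfl⟩, hij⟩ := heq.ge ⟨j, hj, rfl⟩
  refine ⟨i, hi, ?_⟩
  rw [← hij]
  group

lemma Iset_subset_conjInter : Iset cs J w ⊆ conjInter cs (Iset cs J w) (Iset cs J w) w := by
  intro i hi
  obtain ⟨j, hj, hij⟩ := wSpecial_Iset.inv.2 i hi
  exact ⟨hi, j, hj, by rw [← hij]; group⟩

lemma conj_mem_parab_Iset (hu : u ∈ parab cs (Iset cs J w)) :
    w⁻¹ * u * w ∈ parab cs (Iset cs J w) :=
  parab_mono cs (Set.sep_subset _ _)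
    (conj_mem_parab_conjInter (parab_mono cs Iset_subset_conjInter hu))

theorem IsMinRep.mem_parab_Iset_of_commute (hw : IsMinRep cs J w) (hm : m ∈ parab cs J)
    (hmw : Commute m w) : m ∈ parab cs (Iset cs J w) := by
  suffices hspecial : WSpecial cs J w⁻¹ (reducedLetters cs m) from
    parab_mono cs (by simpa using hspecial.inv.subset_Iset) (mem_parab_reducedLetters m)
  refine ⟨reducedLetters_subset hm, ?_⟩
  rintro i ⟨ω, hω, rfl, hi⟩
  have hadd : cs.length (cs.wordProd ω * w) = ω.length + cs.length w := by
    rw [hmw.eq, hw.length_mul hm, hω.eq, add_comm]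
  choose! f hf using hw.exists_simple_mul_eq_of_wordProd_mul_eq hadd hm hmw.eq
  have hmap : cs.wordProd (ω.map f) = cs.wordProd ω :=
    mul_left_cancel ((wordProd_mul_eq_mul_wordProd_map hf).symm.trans hmw.eq)
  refine ⟨f i, ⟨ω.map f, ?_, hmap, List.mem_map_of_mem hi⟩, ?_⟩
  · rw [CoxeterSystem.IsReduced, hmap, hω.eq, List.length_map]
  · rw [mul_assoc, inv_inv, hf i hi, inv_mul_cancel_left]

end Iset

section Orbits

variable {B : Type*} {M : CoxeterMatrix B} {cs : CoxeterSystem M W} {J₁ J₂ : Set B} {w x y z : W}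

lemma mem_orbAct_self (x : W) : x ∈ orbAct cs J₁ J₂ x :=
  ⟨1, one_mem _, 1, one_mem _, 1, one_mem _, by simp⟩

lemma mul_mem_orbAct {a : W} (ha : a ∈ parab cs J₂) (x : W) : a * x ∈ orbAct cs J₁ J₂ x :=
  ⟨a, ha, 1, one_mem _, 1, one_mem _, by simp⟩

lemma mul_mem_orbAct_right {b : W} (hb : b ∈ parab cs J₂) (x : W) : x * b ∈ orbAct cs J₁ J₂ x :=
  ⟨1, one_mem _, b⁻¹, inv_mem hb, 1, one_mem _, by simp⟩

lemma conj_mem_orbAct {c : W} (hc : c ∈ parab cs J₁) (x : W) :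
    c * x * c⁻¹ ∈ orbAct cs J₁ J₂ x :=
  ⟨1, one_mem _, 1, one_mem _, c, hc, by simp⟩

lemma AdTwConj.mem_orbAct {v v' : W} (h : AdTwConj cs J₁ w v v') :
    w * v' ∈ orbAct cs J₁ J₂ (w * v) := by
  obtain ⟨u, hu, rfl⟩ := h
  convert conj_mem_orbAct (parab_mono cs Iset_subset hu) (w * v) using 1
  group

variable (hcomm : ParabCommute cs J₁ J₂)
include hcomm

lemma mem_orbAct_symm (h : y ∈ orbAct cs J₁ J₂ x) : x ∈ orbAct cs J₁ J₂ y := by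
  obtain ⟨a, ha, b, hb, c, hc, rfl⟩ := h
  refine ⟨a⁻¹, inv_mem ha, b⁻¹, inv_mem hb, c⁻¹, inv_mem hc, ?_⟩
  rw [← (hcomm _ (inv_mem hc) _ (inv_mem ha)).eq, inv_inv, inv_inv, mul_assoc _ c b,
    (hcomm c hc b hb).eq]
  group

lemma mem_orbAct_trans (hxy : y ∈ orbAct cs J₁ J₂ x) (hyz : z ∈ orbAct cs J₁ J₂ y) :
    z ∈ orbAct cs J₁ J₂ x := by
  obtain ⟨a, ha, b, hb, c, hc, rfl⟩ := hxy
  obtain ⟨a', ha', b', hb', c', hc', rfl⟩ := hyz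
  refine ⟨a' * a, mul_mem ha' ha, b' * b, mul_mem hb' hb, c' * c, mul_mem hc' hc, ?_⟩
  calc a' * c' * (a * c * x * c⁻¹ * b⁻¹) * c'⁻¹ * b'⁻¹
      = a' * (c' * a) * c * x * c⁻¹ * (b⁻¹ * c'⁻¹) * b'⁻¹ := by group
    _ = a' * (a * c') * c * x * c⁻¹ * (c'⁻¹ * b⁻¹) * b'⁻¹ := by
      rw [(hcomm c' hc' a ha).eq, (hcomm _ (inv_mem hc') _ (inv_mem hb)).eq]
    _ = a' * a * (c' * c) * x * (c' * c)⁻¹ * (b' * b)⁻¹ := by group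

lemma exists_mem_orbAct_of_mem_dSet (hx : x ∈ dSet cs J₁ J₂ w) :
    ∃ v ∈ parab cs (Iset cs J₁ w), w * v ∈ orbAct cs J₁ J₂ x := by
  obtain ⟨a, ha, b, hb, _, ⟨u, hu, v, hv, rfl⟩, rfl⟩ := hx
  refine ⟨v, hv, mem_orbAct_symm hcomm ⟨a, ha, b⁻¹, inv_mem hb, u, hu, ?_⟩⟩
  group

lemma orbAct_eq_iff : orbAct cs J₁ J₂ x = orbAct cs J₁ J₂ y ↔ y ∈ orbAct cs J₁ J₂ x := by
  refine ⟨fun h ↦ h ▸ mem_orbAct_self y, fun h ↦ Set.Subset.antisymm ?_ ?_⟩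
  · exact fun z hz ↦ mem_orbAct_trans hcomm (mem_orbAct_symm hcomm h) hz
  · exact fun z hz ↦ mem_orbAct_trans hcomm h hz

end Orbits

section BackwardSequence

variable {B : Type*} {M : CoxeterMatrix B} {cs : CoxeterSystem M W} {J₁ J₂ : Set B} {w : W}
  {m n : ℕ} {k : B}

lemma mem_Kseq_inv_succ : k ∈ Kseq cs J₁ J₂ w⁻¹ (n + 1) ↔
    k ∈ J₁ ∧ ∃ l ∈ Kseq cs J₁ J₂ w⁻¹ n, cs.simple l * w = w * cs.simple k := by
  simp only [Kseq, Set.mem_ofPred_eq, inv_inv, mul_assoc, inv_mul_eq_iff_eq_mul]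

lemma commute_of_mul_eq {s t s' t' : W} (hs : s' * w = w * s) (ht : t' * w = w * t)
    (hst : Commute s' t') : Commute s t := by
  rw [← eq_mul_inv_iff_mul_eq] at hs ht
  rwa [hs, ht, Commute.conj_iff] at hst

lemma disjoint_Kseq_inv_Iset (hdisj : Disjoint J₁ J₂) :
    Disjoint (Kseq cs J₁ J₂ w⁻¹ n) (Iset cs J₁ w) := by
  induction n with
  | zero => exact hdisj.symm.mono_right Iset_subset
  | succ n ih =>
    refine Set.disjoint_left.mpr fun k hk hkI ↦ ?_
    obtain ⟨-, l, hl, hlk⟩ := mem_Kseq_inv_succ.mp hk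
    obtain ⟨j, hj, hkj⟩ := wSpecial_Iset.2 k hkI
    have hlj : l = j := simple_injective cs (by rw [← hkj, ← hlk, mul_inv_cancel_right])
    exact Set.disjoint_left.mp ih hl (hlj ▸ hj)

variable (hcomm : ParabCommute cs J₁ J₂)
include hcomm

lemma parabCommute_Kseq_inv_Iset :
    ParabCommute cs (Kseq cs J₁ J₂ w⁻¹ n) (Iset cs J₁ w) := by
  induction n with
  | zero => exact hcomm.symm.mono subset_rfl Iset_subset
  | succ n ih =>
    refine .of_simple fun k hk i hi ↦ ?_
    obtain ⟨-, l, hl, hlk⟩ := mem_Kseq_inv_succ.mp hk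
    obtain ⟨j, hj, hij⟩ := wSpecial_Iset.2 i hi
    exact commute_of_mul_eq hlk (mul_inv_eq_iff_eq_mul.mp hij).symm
      (ih _ (simple_mem_parab cs hl) _ (simple_mem_parab cs hj))

lemma commute_conj_simple (hk : k ∈ Kseq cs J₁ J₂ w⁻¹ n) {i : B} (hi : i ∈ Iset cs J₁ w) :
    Commute (w⁻¹ * cs.simple k * w) (cs.simple i) := by
  obtain ⟨j, hj, hij⟩ := wSpecial_Iset.2 i hi
  exact commute_of_mul_eq (by group) (mul_inv_eq_iff_eq_mul.mp hij).symm
    (parabCommute_Kseq_inv_Iset hcomm _ (simple_mem_parab cs hk) _ (simple_mem_parab cs hj))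

lemma parabCommute_Kseq_inv_of_lt (hmn : m < n) :
    ParabCommute cs (Kseq cs J₁ J₂ w⁻¹ n) (Kseq cs J₁ J₂ w⁻¹ m) := by
  induction n generalizing m with
  | zero => simp at hmn
  | succ n ih =>
    cases m with
    | zero => exact hcomm.mono (fun k hk ↦ (mem_Kseq_inv_succ.mp hk).1) subset_rfl
    | succ m =>
      refine .of_simple fun k hk k' hk' ↦ ?_
      obtain ⟨-, l, hl, hlk⟩ := mem_Kseq_inv_succ.mp hk
      obtain ⟨-, l', hl', hlk'⟩ := mem_Kseq_inv_succ.mp hk'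
      exact commute_of_mul_eq hlk hlk' (ih (Nat.lt_of_succ_lt_succ hmn) _
        (simple_mem_parab cs hl) _ (simple_mem_parab cs hl'))

lemma Kseq_inv_subset_simple_mul (hk : k ∈ Kseq cs J₁ J₂ w⁻¹ n) (hmn : m ≤ n) :
    Kseq cs J₁ J₂ w⁻¹ m ⊆ Kseq cs J₁ J₂ (cs.simple k * w)⁻¹ m := by
  induction m with
  | zero => exact subset_rfl
  | succ m ih =>
    intro j hj
    obtain ⟨hjJ, l, hl, hlj⟩ := mem_Kseq_inv_succ.mp hj
    refine mem_Kseq_inv_succ.mpr ⟨hjJ, l, ih (Nat.le_of_succ_le hmn) hl, ?_⟩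
    have hkl : Commute (cs.simple k) (cs.simple l) :=
      parabCommute_Kseq_inv_of_lt hcomm (Nat.lt_of_succ_le hmn) _ (simple_mem_parab cs hk) _
        (simple_mem_parab cs hl)
    rw [← mul_assoc, ← hkl.eq, mul_assoc, hlj, mul_assoc]

lemma simple_mul_mem_orbAct (hk : k ∈ Kseq cs J₁ J₂ w⁻¹ n) {v : W}
    (hv : v ∈ parab cs (Iset cs J₁ w)) : cs.simple k * (w * v) ∈ orbAct cs J₁ J₂ (w * v) := by
  induction n generalizing k with
  | zero => exact mul_mem_orbAct (simple_mem_parab cs hk) _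
  | succ n ih =>
    have hkv : Commute (cs.simple k) v :=
      parabCommute_Kseq_inv_Iset hcomm _ (simple_mem_parab cs hk) _ hv
    obtain ⟨hkJ, l, hl, hlk⟩ := mem_Kseq_inv_succ.mp hk
    refine mem_orbAct_trans hcomm (ih hl) ?_
    convert conj_mem_orbAct (simple_mem_parab cs hkJ) _ using 1
    rw [← mul_assoc (cs.simple l), hlk, mul_assoc w, hkv.eq]
    simp [mul_assoc]

end BackwardSequence

section OrbitsSeparate

/-- If `w v` and `w v'` with `v, v' ∈ W_{I(J₁,w)}` lie in one orbit of the action, then `v` and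
`v'` are `Ad(w)`-twisted conjugate. This is the statement carried through the induction on
`ℓ w`. -/
def OrbitsSeparate (w : W) : Prop :=
  ∀ v ∈ parab cs (Iset cs J₁ w), ∀ v' ∈ parab cs (Iset cs J₁ w),
    w * v' ∈ orbAct cs J₁ J₂ (w * v) → AdTwConj cs J₁ w v v'

variable {cs J₁ J₂} {w z : W} {k : B} {n : ℕ} (hcomm : ParabCommute cs J₁ J₂)
include hcomm

lemma OrbitsSeparate.of_mul (hz : ∀ i ∈ Iset cs J₁ w, Commute z (cs.simple i))
    (hz' : ∀ i ∈ Iset cs J₁ (w * z), Commute z (cs.simple i))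
    (horb : ∀ v ∈ parab cs (Iset cs J₁ w), w * z * v ∈ orbAct cs J₁ J₂ (w * v))
    (h : OrbitsSeparate cs J₁ J₂ (w * z)) : OrbitsSeparate cs J₁ J₂ w := by
  have hI : Iset cs J₁ (w * z) = Iset cs J₁ w :=
    Set.Subset.antisymm
      (by simpa using Iset_subset_Iset_mul (z := z⁻¹) fun i hi ↦ (hz' i hi).inv_left)
      (Iset_subset_Iset_mul hz)
  intro v hv v' hv' hvv'
  obtain ⟨u, hu, rfl⟩ := h v (hI ▸ hv) v' (hI ▸ hv')
    (mem_orbAct_trans hcomm (mem_orbAct_symm hcomm (horb v hv))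
      (mem_orbAct_trans hcomm hvv' (horb v' hv')))
  rw [hI] at hu
  have hconj : (w * z)⁻¹ * u * (w * z) = w⁻¹ * u * w := by
    have hzu : Commute z (w⁻¹ * u * w) := commute_of_mem_parab hz (conj_mem_parab_Iset hu)
    calc (w * z)⁻¹ * u * (w * z) = z⁻¹ * (w⁻¹ * u * w * z) := by group
      _ = w⁻¹ * u * w := by rw [← hzu.eq, inv_mul_cancel_left]
  exact ⟨u, hu, by rw [hconj]⟩

lemma OrbitsSeparate.of_mul_simple (hk : k ∈ J₂) (h : OrbitsSeparate cs J₁ J₂ (w * cs.simple k)) :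
    OrbitsSeparate cs J₁ J₂ w := by
  have hk' := simple_mem_parab cs hk
  have hcomm_k : ∀ i ∈ J₁, Commute (cs.simple k) (cs.simple i) :=
    fun i hi ↦ (hcomm _ (simple_mem_parab cs hi) _ hk').symm
  refine h.of_mul hcomm (fun i hi ↦ hcomm_k i (Iset_subset hi))
    (fun i hi ↦ hcomm_k i (Iset_subset hi)) fun v hv ↦ ?_
  rw [mul_assoc, ← (hcomm v (parab_mono cs Iset_subset hv) _ hk').eq, ← mul_assoc]
  exact mul_mem_orbAct_right hk' _

lemma OrbitsSeparate.of_simple_mul (hk : k ∈ Kseq cs J₁ J₂ w⁻¹ n)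
    (h : OrbitsSeparate cs J₁ J₂ (cs.simple k * w)) : OrbitsSeparate cs J₁ J₂ w := by
  have hkw : w * (w⁻¹ * cs.simple k * w) = cs.simple k * w := by group
  have hk' := Kseq_inv_subset_simple_mul hcomm hk le_rfl hk
  have hconj : (cs.simple k * w)⁻¹ * cs.simple k * (cs.simple k * w) = w⁻¹ * cs.simple k * w := by
    group
  refine OrbitsSeparate.of_mul hcomm (z := w⁻¹ * cs.simple k * w)
    (fun i hi ↦ commute_conj_simple hcomm hk hi) ?_ ?_ (hkw ▸ h) <;> rw [hkw]
  · exact fun i hi ↦ hconj ▸ commute_conj_simple hcomm hk' hi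
  · exact fun v hv ↦ mul_assoc _ w v ▸ simple_mul_mem_orbAct hcomm hk hv

end OrbitsSeparate

section BackwardClosure

/-- The union of the sets `K_n(w⁻¹)`: the smallest set of indices which contains `J₂` and contains
`j ∈ J₁` whenever it contains the index of the simple reflection `w s_j w⁻¹`. -/
def backwardClosure (w : W) : Set B := ⋃ n, Kseq cs J₁ J₂ w⁻¹ n

variable {cs J₁ J₂} {w : W}

section General

variable {B : Type*} {M : CoxeterMatrix B} {cs : CoxeterSystem M W} {J₁ J₂ : Set B}

lemma subset_backwardClosure : J₂ ⊆ backwardClosure cs J₁ J₂ w :=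
  Set.subset_iUnion (Kseq cs J₁ J₂ w⁻¹) 0

lemma mem_backwardClosure_of_mul_eq {j k : B} (hk : k ∈ backwardClosure cs J₁ J₂ w) (hj : j ∈ J₁)
    (hkj : cs.simple k * w = w * cs.simple j) : j ∈ backwardClosure cs J₁ J₂ w := by
  obtain ⟨n, hn⟩ := Set.mem_iUnion.mp hk
  exact Set.mem_iUnion.mpr ⟨n + 1, mem_Kseq_inv_succ.mpr ⟨hj, k, hn, hkj⟩⟩

lemma parabCommute_backwardClosure_Iset (hcomm : ParabCommute cs J₁ J₂) :
    ParabCommute cs (backwardClosure cs J₁ J₂ w) (Iset cs J₁ w) := by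
  refine .of_simple fun k hk i hi ↦ ?_
  obtain ⟨n, hn⟩ := Set.mem_iUnion.mp hk
  exact parabCommute_Kseq_inv_Iset hcomm _ (simple_mem_parab cs hn) _ (simple_mem_parab cs hi)

lemma disjoint_backwardClosure_Iset (hdisj : Disjoint J₁ J₂) :
    Disjoint (backwardClosure cs J₁ J₂ w) (Iset cs J₁ w) :=
  Set.disjoint_iUnion_left.mpr fun _ ↦ disjoint_Kseq_inv_Iset hdisj

lemma conjInter_backwardClosure_subset :
    conjInter cs (J₁ ∪ J₂) (backwardClosure cs J₁ J₂ w) w⁻¹ ⊆ backwardClosure cs J₁ J₂ w := by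
  intro j hj
  obtain ⟨hj₁ | hj₂, k, hk, hkj⟩ := mem_conjInter_inv.mp hj
  · exact mem_backwardClosure_of_mul_eq hk hj₁ hkj
  · exact subset_backwardClosure hj₂

lemma eq_one_of_mul_eq_mul_mul (hdisj : Disjoint J₁ J₂) (hwJ : IsMinRep cs (J₁ ∪ J₂) w)
    (hQ : IsMinRep cs (backwardClosure cs J₁ J₂ w) w⁻¹) {t x y : W}
    (hx : x ∈ parab cs (backwardClosure cs J₁ J₂ w)) (ht : t ∈ parab cs (Iset cs J₁ w))
    (hy : y ∈ parab cs (J₁ ∩ backwardClosure cs J₁ J₂ w ∪ J₂)) (h : x * w = w * (t * y)) :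
    t = 1 := by
  have hconj : w⁻¹ * x * w = t * y := by rw [mul_assoc, h, inv_mul_cancel_left]
  have htyJ : t * y ∈ parab cs (J₁ ∪ J₂) :=
    mul_mem (parab_mono cs (Iset_subset.trans Set.subset_union_left) ht)
      (parab_mono cs (Set.union_subset_union_left _ Set.inter_subset_left) hy)
  have htyQ : t * y ∈ parab cs (backwardClosure cs J₁ J₂ w) :=
    hconj ▸ parab_mono cs conjInter_backwardClosure_subset
      (conj_mem_parab_conjInter (mem_parab_conjInter hQ hwJ hx (hconj ▸ htyJ)))
  have hyQ : y ∈ parab cs (backwardClosure cs J₁ J₂ w) :=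
    parab_mono cs (Set.union_subset Set.inter_subset_right subset_backwardClosure) hy
  exact Subgroup.disjoint_def.mp (disjoint_parab cs (disjoint_backwardClosure_Iset hdisj))
    ((Subgroup.mul_mem_cancel_right _ hyQ).mp htyQ) ht

end General

lemma IsMinRep.inv_Iset (hw : IsMinRep cs J₁ w) : IsMinRep cs (Iset cs J₁ w) w⁻¹ := fun u hu ↦ by
  have hconj : (w⁻¹ * u)⁻¹ = w * (w⁻¹ * u⁻¹ * w) := by group
  rw [cs.length_inv, ← cs.length_inv (w⁻¹ * u), hconj]
  exact hw _ (parab_mono cs Iset_subset (conj_mem_parab_Iset (inv_mem hu)))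

lemma conjInter_backwardClosure_union_Iset_subset :
    conjInter cs (J₁ ∪ J₂) (backwardClosure cs J₁ J₂ w ∪ Iset cs J₁ w) w⁻¹ ⊆
      J₁ ∩ backwardClosure cs J₁ J₂ w ∪ Iset cs J₁ w ∪ J₂ := by
  intro j hj
  obtain ⟨hj₁ | hj₂, k, hk | hk, hkj⟩ := mem_conjInter_inv.mp hj
  · exact .inl (.inl ⟨hj₁, mem_backwardClosure_of_mul_eq hk hj₁ hkj⟩)
  · obtain ⟨-, i, hi, hki⟩ := Iset_subset_conjInter hk
    have hij : i = j := simple_injective cs (mul_left_cancel (hki.symm.trans hkj))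
    exact .inl (.inr (hij ▸ hi))
  · exact .inr hj₂
  · exact .inr hj₂

variable (hdisj : Disjoint J₁ J₂) (hcomm : ParabCommute cs J₁ J₂)
  (hwJ : IsMinRep cs (J₁ ∪ J₂) w) (hQ : IsMinRep cs (backwardClosure cs J₁ J₂ w) w⁻¹)

section Rigidity

variable {b g m r x : W}
include hdisj hcomm hwJ hQ

lemma commute_of_mul_eq_of_isMinRep (hm : m ∈ parab cs J₁)
    (hAm : IsMinRep cs (J₁ ∩ backwardClosure cs J₁ J₂ w ∪ Iset cs J₁ w) m⁻¹)
    (hmI : IsMinRep cs (Iset cs J₁ w) m)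
    (hx : x ∈ parab cs (backwardClosure cs J₁ J₂ w ∪ Iset cs J₁ w))
    (hg : g ∈ parab cs (J₁ ∩ backwardClosure cs J₁ J₂ w ∪ Iset cs J₁ w))
    (hr : r ∈ parab cs (Iset cs J₁ w)) (hb : b ∈ parab cs J₂)
    (heq : m * w = x * w * (g * m * r * b)) : Commute m w := by
  have hQI := hQ.union (hwJ.mono Set.subset_union_left).inv_Iset
  have hAJ : J₁ ∩ backwardClosure cs J₁ J₂ w ∪ Iset cs J₁ w ⊆ J₁ :=
    Set.union_subset Set.inter_subset_left Iset_subset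
  obtain ⟨h, hh, e, he, rfl, hmin⟩ := exists_mul_eq_of_mem_parab hQI hwJ hx
  obtain ⟨e₁, he₁, e₂, he₂, hconj⟩ := (hcomm.mono hAJ subset_rfl).exists_mul_eq_of_mem_union
    (parab_mono cs conjInter_backwardClosure_union_Iset_subset (conj_mem_parab_conjInter he))
  have hgmr : g * m * r ∈ parab cs J₁ :=
    mul_mem (mul_mem (parab_mono cs hAJ hg) hm) (parab_mono cs Iset_subset hr)
  have hmid : e₁ * g * m * r ∈ parab cs J₁ := by
    simpa only [mul_assoc] using mul_mem (parab_mono cs hAJ he₁) hgmr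
  have hend : e₂ * b ∈ parab cs J₂ := mul_mem he₂ hb
  have hfactor : m * w = h * w * (e₁ * g * m * r * (e₂ * b)) := calc
    m * w = h * w * (w⁻¹ * e * w) * (g * m * r * b) := by rw [heq]; group
    _ = h * w * e₁ * (e₂ * (g * m * r)) * b := by rw [hconj]; group
    _ = h * w * (e₁ * g * m * r * (e₂ * b)) := by rw [← (hcomm _ hgmr _ he₂).eq]; group
  have hlen := congrArg cs.length hfactor
  rw [hmin.length_mul (mul_mem (parab_mono cs Set.subset_union_left hmid)
      (parab_mono cs Set.subset_union_right hend)), hQI.length_mul_left hh,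
    (isMinRep_of_mem_parab_of_disjoint hdisj hmid).length_mul hend] at hlen
  have hle := cs.length_mul_le m w
  obtain hm_eq | hlt := mul_mul_eq_or_length_lt hAm hmI (mul_mem he₁ hg) hr
  · rw [hm_eq] at hlen hfactor
    have hh1 : h = 1 := cs.length_eq_zero_iff.mp (by lia)
    have hend1 : e₂ * b = 1 := cs.length_eq_zero_iff.mp (by lia)
    rwa [hh1, hend1, one_mul, mul_one] at hfactor
  · lia

end Rigidity

variable {a b c v v' : W} (hv : v ∈ parab cs (Iset cs J₁ w)) (hv' : v' ∈ parab cs (Iset cs J₁ w))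
  (ha : a ∈ parab cs J₂) (hb : b ∈ parab cs J₂)
  (heq : a * c * (w * v) = w * v' * (b * c))
include hdisj hcomm hwJ hQ hv hv' ha hb heq

lemma mem_parab_of_mul_eq (hc : c ∈ parab cs J₁) :
    c ∈ parab cs (J₁ ∩ backwardClosure cs J₁ J₂ w ∪ Iset cs J₁ w) := by
  obtain ⟨m, hAm, hmI, g, hg, q, hq, rfl⟩ := exists_isMinRep_mul_mul (cs := cs)
    (J₁ ∩ backwardClosure cs J₁ J₂ w ∪ Iset cs J₁ w) (Iset cs J₁ w) c
  have hAJ : J₁ ∩ backwardClosure cs J₁ J₂ w ∪ Iset cs J₁ w ⊆ J₁ :=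
    Set.union_subset Set.inter_subset_left Iset_subset
  have hIA : parab cs (Iset cs J₁ w) ≤
      parab cs (J₁ ∩ backwardClosure cs J₁ J₂ w ∪ Iset cs J₁ w) :=
    parab_mono cs Set.subset_union_right
  have hm : m ∈ parab cs J₁ := by
    rwa [Subgroup.mul_mem_cancel_right _ (parab_mono cs Iset_subset hq),
      Subgroup.mul_mem_cancel_left _ (parab_mono cs hAJ hg)] at hc
  have hqv : (w⁻¹ * q * w * v)⁻¹ ∈ parab cs (Iset cs J₁ w) :=
    inv_mem (mul_mem (conj_mem_parab_Iset hq) hv)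
  have hx : (a * g)⁻¹ ∈ parab cs (backwardClosure cs J₁ J₂ w ∪ Iset cs J₁ w) :=
    inv_mem (mul_mem (parab_mono cs (subset_backwardClosure.trans Set.subset_union_left) ha)
      (parab_mono cs (Set.union_subset_union_left _ Set.inter_subset_right) hg))
  have hb_comm : Commute (g * m * q * (w⁻¹ * q * w * v)⁻¹) b :=
    hcomm _ (mul_mem hc (parab_mono cs Iset_subset hqv)) _ hb
  have hmw : m * w = (a * g)⁻¹ * w * (v' * g * m * (q * (w⁻¹ * q * w * v)⁻¹) * b) := calc
    m * w = (a * g)⁻¹ * (a * (g * m * q) * (w * v)) * (w⁻¹ * q * w * v)⁻¹ := by group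
    _ = (a * g)⁻¹ * w * v' * (b * (g * m * q * (w⁻¹ * q * w * v)⁻¹)) := by rw [heq]; group
    _ = (a * g)⁻¹ * w * (v' * g * m * (q * (w⁻¹ * q * w * v)⁻¹) * b) := by
      rw [← hb_comm.eq]
      group
  have hmw_comm : Commute m w := commute_of_mul_eq_of_isMinRep hdisj hcomm hwJ hQ hm hAm hmI hx
    (mul_mem (hIA hv') hg) (mul_mem hq hqv) hb hmw
  have hm1 : m = 1 := hmI.eq_one
    ((hwJ.mono Set.subset_union_left).mem_parab_Iset_of_commute hm hmw_comm)
  rw [hm1, mul_one]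
  exact mul_mem hg (hIA hq)

lemma adTwConj_of_mul_eq (hc : c ∈ parab cs J₁) : AdTwConj cs J₁ w v v' := by
  have hQI := parabCommute_backwardClosure_Iset (w := w) hcomm
  obtain ⟨n, hn, u, hu, rfl⟩ :=
    (hQI.mono Set.inter_subset_right subset_rfl).exists_mul_eq_of_mem_union
      (mem_parab_of_mul_eq hdisj hcomm hwJ hQ hv hv' ha hb heq hc)
  refine ⟨u, hu, ?_⟩
  set v₁ := w⁻¹ * u * w * v * u⁻¹ with hv₁_def
  have hv₁ : v₁ ∈ parab cs (Iset cs J₁ w) :=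
    mul_mem (mul_mem (conj_mem_parab_Iset hu) hv) (inv_mem hu)
  have hbn : b * n ∈ parab cs (J₁ ∩ backwardClosure cs J₁ J₂ w ∪ J₂) :=
    mul_mem (parab_mono cs Set.subset_union_right hb) (parab_mono cs Set.subset_union_left hn)
  have hbn_comm : Commute (b * n) v₁⁻¹ :=
    hQI _ (parab_mono cs (Set.union_subset Set.inter_subset_right subset_backwardClosure) hbn) _
      (inv_mem hv₁)
  have hmain : a * n * w = w * (v' * v₁⁻¹ * (b * n)) := calc
    a * n * w = a * (n * u) * (w * v) * u⁻¹ * v₁⁻¹ := by rw [hv₁_def]; group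
    _ = w * v' * (b * n * v₁⁻¹) := by rw [heq]; group
    _ = w * (v' * v₁⁻¹ * (b * n)) := by rw [hbn_comm.eq]; group
  have hx : a * n ∈ parab cs (backwardClosure cs J₁ J₂ w) :=
    mul_mem (parab_mono cs subset_backwardClosure ha) (parab_mono cs Set.inter_subset_right hn)
  exact mul_inv_eq_one.mp
    (eq_one_of_mul_eq_mul_mul hdisj hwJ hQ hx (mul_mem hv' (inv_mem hv₁)) hbn hmain)

end BackwardClosure

section Main

variable {cs J₁ J₂} {w : W}

theorem IsMinRep.orbitsSeparate (hdisj : Disjoint J₁ J₂) (hcomm : ParabCommute cs J₁ J₂)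
    (hw : IsMinRep cs J₁ w) : OrbitsSeparate cs J₁ J₂ w := by
  induction hn : cs.length w using Nat.strong_induction_on generalizing w with
  | _ n ih =>
    subst hn
    by_cases hwJ₂ : IsMinRep cs J₂ w
    · by_cases hQ : IsMinRep cs (backwardClosure cs J₁ J₂ w) w⁻¹
      · rintro v hv v' hv' ⟨a, ha, b, hb, c, hc, heq⟩
        refine adTwConj_of_mul_eq hdisj hcomm (hw.union hwJ₂) hQ hv hv' ha hb ?_ hc
        rw [heq]
        group
      · simp only [isMinRep_iff_forall_not_isRightDescent, isRightDescent_inv_iff, not_forall,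
          not_not] at hQ
        obtain ⟨k, hk, hdesc⟩ := hQ
        obtain ⟨m, hm⟩ := Set.mem_iUnion.mp hk
        have hlen := cs.isLeftDescent_iff.mp hdesc
        have hmin : IsMinRep cs J₁ (cs.simple k * w) :=
          IsMinRep.of_length_mul (x := cs.simple k) (by rwa [simple_mul_simple_cancel_left])
            (by rw [simple_mul_simple_cancel_left, length_simple]; lia)
        exact (ih _ hdesc hmin rfl).of_simple_mul hcomm hm
    · simp only [isMinRep_iff_forall_not_isRightDescent, not_forall, not_not] at hwJ₂
      obtain ⟨k, hk, hdesc⟩ := hwJ₂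
      have hmin : IsMinRep cs J₁ (w * cs.simple k) :=
        hw.mul_simple hdesc fun u hu ↦ hcomm u hu _ (simple_mem_parab cs hk)
      exact (ih _ hdesc hmin rfl).of_mul_simple hcomm hk

end Main

theorem stmt12_general (hdisj : Disjoint J₁ J₂)
    (hcomm : ∀ j₁ ∈ J₁, ∀ j₂ ∈ J₂,
      cs.simple j₁ * cs.simple j₂ = cs.simple j₂ * cs.simple j₁)
    (w : W) (hw : IsMinRep cs J₁ w) :
    (∀ v ∈ parab cs (Iset cs J₁ w), ∀ v' ∈ parab cs (Iset cs J₁ w),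
      w * v' ∈ orbAct cs J₁ J₂ (w * v) ↔ AdTwConj cs J₁ w v v') ∧
    (∀ x ∈ dSet cs J₁ J₂ w, ∃ v ∈ parab cs (Iset cs J₁ w),
      w * v ∈ orbAct cs J₁ J₂ x) ∧
    (∀ v ∈ parab cs (Iset cs J₁ w), ∀ v' ∈ parab cs (Iset cs J₁ w),
      orbAct cs J₁ J₂ (w * v) = orbAct cs J₁ J₂ (w * v') ↔
        AdTwConj cs J₁ w v v') ∧
    (∀ x ∈ dSet cs J₁ J₂ w, ∃ v ∈ parab cs (Iset cs J₁ w),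
      orbAct cs J₁ J₂ x = orbAct cs J₁ J₂ (w * v)) := by
  have hpar : ParabCommute cs J₁ J₂ := .of_simple hcomm
  simp only [orbAct_eq_iff hpar]
  have hiff : ∀ v ∈ parab cs (Iset cs J₁ w), ∀ v' ∈ parab cs (Iset cs J₁ w),
      w * v' ∈ orbAct cs J₁ J₂ (w * v) ↔ AdTwConj cs J₁ w v v' :=
    fun v hv v' hv' ↦ ⟨hw.orbitsSeparate hdisj hpar v hv v' hv', AdTwConj.mem_orbAct⟩
  have hexists : ∀ x ∈ dSet cs J₁ J₂ w, ∃ v ∈ parab cs (Iset cs J₁ w),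
      w * v ∈ orbAct cs J₁ J₂ x := fun _ ↦ exists_mem_orbAct_of_mem_dSet hpar
  exact ⟨hiff, hexists, hiff, hexists⟩

/-- For `w ∈ 𝒲(J₁, J₂)`: `w v` and `w v'` lie in the same
orbit of the `W_{J₂} × W_{J₂} × W_{J₁}`-action iff `v, v'` are `Ad(w)`-twisted
conjugate in `W_{I(J₁,w)}`; every orbit contained in `W_{J₂} π⁻¹(w) W_{J₂}`
contains some `w v`; hence `v ↦ (orbit of w v)` induces a bijection from the
`Ad(w)`-twisted conjugacy classes of `W_{I(J₁,w)}` onto the orbits contained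
in `W_{J₂} π⁻¹(w) W_{J₂}`. -/
theorem stmt12 (hdisj : Disjoint J₁ J₂)
    (hcomm : ∀ j₁ ∈ J₁, ∀ j₂ ∈ J₂,
      cs.simple j₁ * cs.simple j₂ = cs.simple j₂ * cs.simple j₁)
    (w : W) (hw : w ∈ calW cs J₁ J₂) :
    (∀ v ∈ parab cs (Iset cs J₁ w), ∀ v' ∈ parab cs (Iset cs J₁ w),
      w * v' ∈ orbAct cs J₁ J₂ (w * v) ↔ AdTwConj cs J₁ w v v') ∧
    (∀ x ∈ dSet cs J₁ J₂ w, ∃ v ∈ parab cs (Iset cs J₁ w),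
      w * v ∈ orbAct cs J₁ J₂ x) ∧
    (∀ v ∈ parab cs (Iset cs J₁ w), ∀ v' ∈ parab cs (Iset cs J₁ w),
      orbAct cs J₁ J₂ (w * v) = orbAct cs J₁ J₂ (w * v') ↔
        AdTwConj cs J₁ w v v') ∧
    (∀ x ∈ dSet cs J₁ J₂ w, ∃ v ∈ parab cs (Iset cs J₁ w),
      orbAct cs J₁ J₂ x = orbAct cs J₁ J₂ (w * v)) :=
  stmt12_general cs J₁ J₂ hdisj hcomm w hw.1

end PartialConjugation
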